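/- arXiv:1811.06155 — 3 statements merged into one kernel-verified Lean document; each statement's English description precedes it below -/
import Mathlib

section
/- Every finite connected simple graph G admits an orientation D such that the cop number of D is at least ⌈diam(G)/2⌉, where diam(G) is the diameter of G (the maximum over pairs of vertices of the graph distance). -/
open Classical

universe u

namespace CopsRobbers

variable {V : Type u}

/-- `CatchIn A k t c r` holds when, in the cops-and-robbers game on the digraph
with arc relation `A`, with the `k` cops currently at positions `c`, the robber
currently at `r`, and the cops to move, the cops can guarantee that some cop
occupies the robber's vertex within `t` further rounds (in each round every cop
either stays or moves along an out-arc, then the robber either stays or moves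
along an out-arc; capture may occur right after the cops' move or after the
robber's move). -/
inductive CatchIn (A : V → V → Prop) (k : ℕ) : ℕ → (Fin k → V) → V → Prop
  | caught {t : ℕ} {c : Fin k → V} {r : V} (h : ∃ i, c i = r) : CatchIn A k t c r
  | stepCatch {t : ℕ} {c : Fin k → V} {r : V} (c' : Fin k → V)
      (hc : ∀ i, c' i = c i ∨ A (c i) (c' i)) (h : ∃ i, c' i = r) :
      CatchIn A k (t + 1) c r
  | step {t : ℕ} {c : Fin k → V} {r : V} (c' : Fin k → V)
      (hc : ∀ i, c' i = c i ∨ A (c i) (c' i))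
      (h : ∀ r' : V, r' = r ∨ A r r' → CatchIn A k t c' r') :
      CatchIn A k (t + 1) c r

/-- `k` cops can choose initial positions guaranteeing capture within `t` rounds,
no matter which starting vertex the robber then chooses. -/
def CopsWinIn (A : V → V → Prop) (k t : ℕ) : Prop :=
  ∃ c : Fin k → V, ∀ r : V, CatchIn A k t c r

/-- `k` cops have a winning strategy on the digraph with arc relation `A`. -/
def CopsWin (A : V → V → Prop) (k : ℕ) : Prop := ∃ t, CopsWinIn A k t

/-- The cop number of a digraph: the least `k` such that `k` cops have a winning
strategy. -/
noncomputable def copNumber (A : V → V → Prop) : ℕ := sInf {k | CopsWin A k}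

/-- The capture time of a digraph: the least `t` such that `copNumber A` cops
can guarantee capture within `t` rounds. -/
noncomputable def captureTime (A : V → V → Prop) : ℕ :=
  sInf {t | CopsWinIn A (copNumber A) t}

/-- `A` is an orientation of the simple graph `G`: each edge of `G` is given
exactly one direction, and there are no other arcs. -/
def IsOrientation (G : SimpleGraph V) (A : V → V → Prop) : Prop :=
  (∀ u v, G.Adj u v ↔ (A u v ∨ A v u)) ∧ ∀ u v, A u v → ¬ A v u

/-- An oriented graph: a digraph with no loops and no pair of opposite arcs. -/
def IsOriented (A : V → V → Prop) : Prop := ∀ u v, A u v → ¬ A v u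

/-- A digraph is strongly connected if every vertex is reachable from every
other by a directed path. -/
def StronglyConnected (A : V → V → Prop) : Prop :=
  ∀ u v : V, Relation.ReflTransGen A u v

/-- A robber staying on a source that no cop occupies is never caught. -/
lemma CatchIn.exists_eq_of_source {V : Type u} {A : V → V → Prop} {k t : ℕ} {c : Fin k → V}
    {s : V} (hs : ∀ v, ¬ A v s) (h : CatchIn A k t c s) : ∃ i, c i = s := by
  have pull {c c' : Fin k → V} (hc : ∀ i, c' i = c i ∨ A (c i) (c' i)) :
      (∃ i, c' i = s) → ∃ i, c i = s := by
    rintro ⟨i, rfl⟩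
    exact ⟨i, ((hc i).resolve_right (hs _)).symm⟩
  induction t generalizing c with
  | zero => cases h with | caught h => exact h
  | succ t ih =>
    cases h with
    | caught h => exact h
    | stepCatch c' hc h => exact pull hc h
    | step c' hc h => exact pull hc (ih (h s (Or.inl rfl)))

/-- On a finite vertex set, the cop number is attained. -/
lemma copsWin_copNumber {V : Type u} [Fintype V] (A : V → V → Prop) :
    CopsWin A (copNumber A) :=
  Nat.sInf_mem (s := {k | CopsWin A k})
    ⟨Fintype.card V, 0, (Fintype.equivFin V).symm, fun r =>
      .caught ⟨Fintype.equivFin V r, Equiv.symm_apply_apply _ r⟩⟩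

/-- The cop number is at least the number of sources. -/
lemma le_copNumber_of_sources {V : Type u} [Fintype V] {A : V → V → Prop} {m : ℕ}
    {f : Fin m → V} (hf : Function.Injective f) (hs : ∀ i v, ¬ A v (f i)) :
    m ≤ copNumber A := by
  obtain ⟨t, c, hc⟩ := copsWin_copNumber A
  choose g hg using fun i => (hc (f i)).exists_eq_of_source (hs i)
  have hinj : Function.Injective g := fun i j hij => hf (by rw [← hg i, ← hg j, hij])
  simpa using Fintype.card_le_of_injective g hinj

/-- Any independent set can be made to consist of sources by an orientation. -/
lemma exists_isOrientation_sources {V : Type u} (G : SimpleGraph V) (S : Set V)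
    (hS : ∀ u ∈ S, ∀ v ∈ S, ¬ G.Adj u v) :
    ∃ A : V → V → Prop, IsOrientation G A ∧ ∀ s ∈ S, ∀ v, ¬ A v s := by
  let r : V → V → Prop := WellOrderingRel
  refine ⟨fun u v => G.Adj u v ∧ v ∉ S ∧ (u ∈ S ∨ r u v), ⟨fun u v => ?_, ?_⟩, ?_⟩
  · refine ⟨fun h => ?_, ?_⟩
    · have hind := fun hu hv => hS u hu v hv h
      have := h.symm
      have htri : r u v ∨ u = v ∨ r v u := trichotomous_of r u v
      have := h.ne
      tauto
    · rintro (h | h)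
      exacts [h.1, h.1.symm]
  · rintro u v ⟨-, hv, huv⟩ ⟨-, hu, hvu⟩
    exact asymm_of r (huv.resolve_left hu) (hvu.resolve_left hv)
  · rintro s hs v ⟨-, h, -⟩
    exact h hs

/-- In a connected graph, every distance up to a realized one is realized. -/
lemma exists_dist_eq_of_le {V : Type u} {G : SimpleGraph V} (hG : G.Connected) {x y : V} {n : ℕ}
    (hn : n ≤ G.dist x y) : ∃ z, G.dist x z = n := by
  obtain ⟨p, hp⟩ := hG.exists_walk_length_eq_dist x y
  refine ⟨p.getVert n, le_antisymm ?_ ?_⟩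
  · exact (SimpleGraph.dist_le (p.take n)).trans (by simp)
  · have h₁ := SimpleGraph.dist_le (p.drop n)
    have h₂ := hG.dist_triangle (u := x) (v := p.getVert n) (w := y)
    rw [SimpleGraph.Walk.drop_length] at h₁
    omega

/-- Every finite connected simple graph `G` admits an orientation whose cop
number is at least `⌈diam G / 2⌉`. -/
theorem stmt_1 {V : Type u} [Fintype V] (G : SimpleGraph V) (hG : G.Connected) :
    ∃ A : V → V → Prop, IsOrientation G A ∧ (G.diam + 1) / 2 ≤ copNumber A := by
  have := hG.nonempty
  obtain ⟨x, y, hxy⟩ := G.exists_dist_eq_diam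
  have hex (i : Fin ((G.diam + 1) / 2)) : ∃ z, G.dist x z = 2 * i :=
    exists_dist_eq_of_le hG (y := y) (by omega)
  choose f hf using hex
  obtain ⟨A, hA, hsrc⟩ := exists_isOrientation_sources G (Set.range f) <| by
    rintro _ ⟨i, rfl⟩ _ ⟨j, rfl⟩ hadj
    have h₁ := hG.dist_triangle (u := x) (v := f i) (w := f j)
    have h₂ := hG.dist_triangle (u := x) (v := f j) (w := f i)
    rw [SimpleGraph.dist_eq_one_iff_adj.mpr hadj, hf, hf] at h₁
    rw [SimpleGraph.dist_eq_one_iff_adj.mpr hadj.symm, hf, hf] at h₂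
    have hij : i = j := by omega
    exact hadj.ne (congrArg f hij)
  refine ⟨A, hA, le_copNumber_of_sources (f := f) (fun i j hij => ?_) fun i =>
    hsrc _ (Set.mem_range_self i)⟩
  have h := congrArg (G.dist x) hij
  rw [hf, hf] at h
  omega

end CopsRobbers
end

section
/- There exists a finite simple graph G such that every strongly connected orientation D of G satisfies c(D) < c(G). (The Petersen graph is such a graph: c(G) = 3 while every strongly connected orientation has cop number 2.) -/
open Classical

universe u

namespace CopsRobbers

variable {V : Type u}

set_option exponentiation.threshold 1000

/-! ### Encoding sets of positions of two cops on ten vertices -/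

/-- The index of the position with the cops at `a` and `b` and the robber at `r`; a set of
positions is encoded by the natural number whose binary digits at these indices are `1`. -/
def posIndex (a b r : Fin 10) : ℕ := 100 * a + 10 * b + r

/-- The set of all positions. -/
def positionMask : ℕ := 2 ^ 1000 - 1

/-- The positions whose first cop is at `0`. -/
def firstCopMask : ℕ := 2 ^ 100 - 1

/-- The positions whose second cop is at `0`. -/
def secondCopMask : ℕ := positionMask / (2 ^ 100 - 1) * (2 ^ 10 - 1)

/-- The positions whose robber is at `0`. -/
def robberMask : ℕ := positionMask / (2 ^ 10 - 1)

/-- The positions in which some cop occupies the vertex of the robber. -/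
def captureMask : ℕ :=
  (List.range 10).foldr
    (fun r s => s ||| (robberMask <<< r) &&&
      (firstCopMask <<< (100 * r) ||| secondCopMask <<< (10 * r))) 0

/-- Translate a set of positions along the arc `e`, in the coordinate of weight `w`. -/
def pull (w : ℕ) (e : Fin 10 × Fin 10) (s : ℕ) : ℕ := (s <<< (w * e.1)) >>> (w * e.2)

/-- The positions from which one cop can move into `s`; that cop is described by the weight of
her coordinate and by the mask of the positions where she is at `0`. -/
def copPre (w mask : ℕ) (arcs : List (Fin 10 × Fin 10)) (s : ℕ) : ℕ :=
  arcs.foldr (fun e t => t ||| (mask <<< (w * e.1)) &&& pull w e s) s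

/-- The positions from which the robber cannot leave `s`. -/
def robberPre (arcs : List (Fin 10 × Fin 10)) (s : ℕ) : ℕ :=
  arcs.foldr (fun e t => t &&& ((positionMask ^^^ (robberMask <<< e.1.val)) ||| pull 1 e s)) s

/-- The positions from which the cops capture the robber or enforce `s` within one round. -/
def roundPre (arcs : List (Fin 10 × Fin 10)) (s : ℕ) : ℕ :=
  copPre 100 firstCopMask arcs (copPre 10 secondCopMask arcs (captureMask ||| robberPre arcs s))

/-- The positions from which the cops capture the robber within the given number of rounds. -/
def winning (arcs : List (Fin 10 × Fin 10)) : ℕ → ℕ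
  | 0 => 0
  | t + 1 => roundPre arcs (winning arcs t)

/-- The indices of the pairs of cop positions that are in `s` together with every position of the
robber. -/
def allRobbers (s : ℕ) : ℕ :=
  (List.range 10).foldr (fun r t => t &&& (s >>> r)) robberMask

lemma testBit_pull {w i : ℕ} {e : Fin 10 × Fin 10} {s : ℕ} (h : w * e.1.val ≤ i + w * e.2.val) :
    (pull w e s).testBit i = s.testBit (i + w * e.2 - w * e.1) := by
  simp only [pull, Nat.testBit_shiftRight, Nat.testBit_shiftLeft]
  rw [add_comm (w * e.2.val) i]
  simp [h]

lemma exists_of_testBit_copPre {w mask i s : ℕ} {arcs : List (Fin 10 × Fin 10)}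
    (h : (copPre w mask arcs s).testBit i) :
    s.testBit i ∨
      ∃ e ∈ arcs, (mask <<< (w * e.1.val)).testBit i ∧ (pull w e s).testBit i := by
  induction arcs with
  | nil => exact .inl h
  | cons e arcs ih =>
    simp only [copPre, List.foldr_cons, Nat.testBit_or, Nat.testBit_and, Bool.or_eq_true,
      Bool.and_eq_true] at h
    rcases h with h | h
    · rcases ih h with h | ⟨e', he', h⟩
      · exact .inl h
      · exact .inr ⟨e', List.mem_cons_of_mem _ he', h⟩
    · exact .inr ⟨e, List.mem_cons_self, h⟩

lemma of_testBit_robberPre {i s : ℕ} {arcs : List (Fin 10 × Fin 10)}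
    (h : (robberPre arcs s).testBit i) :
    s.testBit i ∧ ∀ e ∈ arcs, ((positionMask ^^^ (robberMask <<< e.1.val)).testBit i ∨
      (pull 1 e s).testBit i) := by
  induction arcs with
  | nil => exact ⟨h, by simp⟩
  | cons e arcs ih =>
    simp only [robberPre, List.foldr_cons, Nat.testBit_or, Nat.testBit_and, Bool.or_eq_true,
      Bool.and_eq_true] at h
    obtain ⟨hs, he⟩ := ih h.1
    exact ⟨hs, List.forall_mem_cons.2 ⟨h.2, he⟩⟩

lemma testBit_positionMask (i : ℕ) : positionMask.testBit i = decide (i < 1000) :=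
  Nat.testBit_two_pow_sub_one 1000 i

lemma testBit_robberMask (i : ℕ) : robberMask.testBit i = decide (i < 1000 ∧ i % 10 = 0) := by
  have small : ∀ i < 1000, robberMask.testBit i = decide (i % 10 = 0) := by decide +kernel
  have bound : robberMask < 2 ^ 1000 := by decide +kernel
  by_cases hi : i < 1000
  · simp [small i hi, hi]
  · rw [Nat.testBit_lt_two_pow (bound.trans_le (Nat.pow_le_pow_right two_pos (not_lt.1 hi)))]
    simp [hi]

lemma mod_lt_of_testBit_secondCopMask {i : ℕ} (hi : i < 1000) (h : secondCopMask.testBit i) :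
    i % 100 < 10 := by
  have : ∀ i < 1000, secondCopMask.testBit i → i % 100 < 10 := by decide +kernel
  exact this i hi h

lemma eq_or_eq_of_testBit_captureMask {a b r : Fin 10}
    (h : captureMask.testBit (posIndex a b r)) : a = r ∨ b = r := by
  have : ∀ a b r, captureMask.testBit (posIndex a b r) → a = r ∨ b = r := by decide +kernel
  exact this a b r h

lemma exists_of_testBit_copPre_first {arcs : List (Fin 10 × Fin 10)} {s : ℕ} {a b r : Fin 10}
    (h : (copPre 100 firstCopMask arcs s).testBit (posIndex a b r)) :
    ∃ a', (a' = a ∨ (a, a') ∈ arcs) ∧ s.testBit (posIndex a' b r) := by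
  rcases exists_of_testBit_copPre h with h | ⟨⟨u, v⟩, he, hm, hp⟩
  · exact ⟨a, .inl rfl, h⟩
  · simp only [firstCopMask, Nat.testBit_shiftLeft, Nat.testBit_two_pow_sub_one, posIndex,
      Bool.and_eq_true, decide_eq_true_eq] at hm
    obtain rfl : u = a := by omega
    refine ⟨v, .inr he, ?_⟩
    rw [testBit_pull (by simp only [posIndex]; omega)] at hp
    convert hp using 2
    simp only [posIndex]
    omega

lemma exists_of_testBit_copPre_second {arcs : List (Fin 10 × Fin 10)} {s : ℕ} {a b r : Fin 10}
    (h : (copPre 10 secondCopMask arcs s).testBit (posIndex a b r)) :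
    ∃ b', (b' = b ∨ (b, b') ∈ arcs) ∧ s.testBit (posIndex a b' r) := by
  rcases exists_of_testBit_copPre h with h | ⟨⟨u, v⟩, he, hm, hp⟩
  · exact ⟨b, .inl rfl, h⟩
  · simp only [Nat.testBit_shiftLeft, posIndex, Bool.and_eq_true, decide_eq_true_eq] at hm
    have := mod_lt_of_testBit_secondCopMask (by omega) hm.2
    obtain rfl : u = b := by omega
    refine ⟨v, .inr he, ?_⟩
    rw [testBit_pull (by simp only [posIndex]; omega)] at hp
    convert hp using 2
    simp only [posIndex]
    omega

lemma forall_of_testBit_robberPre {arcs : List (Fin 10 × Fin 10)} {s : ℕ} {a b r r' : Fin 10}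
    (h : (robberPre arcs s).testBit (posIndex a b r)) (hr : r' = r ∨ (r, r') ∈ arcs) :
    s.testBit (posIndex a b r') := by
  obtain ⟨hs, harcs⟩ := of_testBit_robberPre h
  rcases hr with rfl | hr
  · exact hs
  · rcases harcs _ hr with hm | hp
    · rw [Nat.testBit_xor, testBit_positionMask, Nat.testBit_shiftLeft,
        testBit_robberMask] at hm
      simp only [posIndex] at hm
      have h₁ : 100 * a.val + 10 * b.val + r.val < 1000 := by omega
      have h₂ : r.val ≤ 100 * a.val + 10 * b.val + r.val := by omega
      have h₃ : 100 * a.val + 10 * b.val < 1000 := by omega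
      have h₄ : (100 * a.val + 10 * b.val) % 10 = 0 := by omega
      simp [h₁, h₃, h₄] at hm
    · rw [testBit_pull (by simp only [posIndex]; omega)] at hp
      convert hp using 2
      simp only [posIndex]
      omega

lemma catchIn_of_testBit_winning {A : Fin 10 → Fin 10 → Prop} {arcs : List (Fin 10 × Fin 10)}
    (hA : ∀ u v, A u v ↔ (u, v) ∈ arcs) {t : ℕ} {a b r : Fin 10}
    (h : (winning arcs t).testBit (posIndex a b r)) : CatchIn A 2 t ![a, b] r := by
  induction t generalizing a b r with
  | zero => simp [winning] at h
  | succ t ih =>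
    rw [winning, roundPre] at h
    obtain ⟨a', ha, h⟩ := exists_of_testBit_copPre_first h
    obtain ⟨b', hb, h⟩ := exists_of_testBit_copPre_second h
    have hmove : ∀ i, ![a', b'] i = ![a, b] i ∨ A (![a, b] i) (![a', b'] i) := by
      simp only [hA]
      exact Fin.forall_fin_two.2 ⟨ha, hb⟩
    rw [Nat.testBit_or, Bool.or_eq_true] at h
    rcases h with h | h
    · exact .stepCatch _ hmove (Fin.exists_fin_two.2 (eq_or_eq_of_testBit_captureMask h))
    · exact .step _ hmove fun r' hr =>
        ih (forall_of_testBit_robberPre h (by rwa [← hA]))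

lemma exists_forall_testBit_of_allRobbers_ne_zero {s : ℕ} (h : allRobbers s ≠ 0) :
    ∃ a b, ∀ r, s.testBit (posIndex a b r) := by
  obtain ⟨i, hi⟩ := Nat.exists_testBit_of_ne_zero h
  rw [allRobbers] at hi
  have key : ∀ l : List ℕ, (l.foldr (fun r t => t &&& (s >>> r)) robberMask).testBit i →
      robberMask.testBit i ∧ ∀ r ∈ l, s.testBit (r + i) := by
    intro l hl
    induction l with
    | nil =>
      rw [List.foldr_nil] at hl
      exact ⟨hl, List.forall_mem_nil _⟩
    | cons r l ih =>
      rw [List.foldr_cons, Nat.testBit_and, Nat.testBit_shiftRight, Bool.and_eq_true] at hl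
      exact ⟨(ih hl.1).1, List.forall_mem_cons.2 ⟨hl.2, (ih hl.1).2⟩⟩
  obtain ⟨hmask, hall⟩ := key _ hi
  rw [testBit_robberMask, decide_eq_true_eq] at hmask
  refine ⟨⟨i / 100, by omega⟩, ⟨i / 10 % 10, by omega⟩, fun r => ?_⟩
  have hindex : posIndex ⟨i / 100, by omega⟩ ⟨i / 10 % 10, by omega⟩ r = r + i := by
    simp only [posIndex]
    omega
  rw [hindex]
  exact hall r (List.mem_range.2 r.isLt)

lemma copsWin_two_of_allRobbers_ne_zero {A : Fin 10 → Fin 10 → Prop}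
    {arcs : List (Fin 10 × Fin 10)} (hA : ∀ u v, A u v ↔ (u, v) ∈ arcs) {t : ℕ}
    (h : allRobbers (winning arcs t) ≠ 0) : CopsWin A 2 := by
  obtain ⟨a, b, hab⟩ := exists_forall_testBit_of_allRobbers_ne_zero h
  exact ⟨t, ![a, b], fun r => catchIn_of_testBit_winning hA (hab r)⟩

/-! ### Searching through the orientations of a list of edges -/

/-- The set of vertices in `l`, encoded by binary digits. -/
def vertexMask (l : List (Fin 10)) : ℕ := l.foldr (fun v s => s ||| 2 ^ v.val) 0

lemma testBit_vertexMask (l : List (Fin 10)) (i : ℕ) :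
    (vertexMask l).testBit i = true ↔ ∃ v ∈ l, v.val = i := by
  induction l with
  | nil => simp [vertexMask]
  | cons v l ih =>
    simp only [vertexMask, List.foldr_cons, Nat.testBit_or, Nat.testBit_two_pow, Bool.or_eq_true,
      decide_eq_true_eq, List.exists_mem_cons_iff] at ih ⊢
    rw [ih, or_comm]

lemma vertexMask_eq {l : List (Fin 10)} (h : ∀ v, v ∈ l) : vertexMask l = 1023 := by
  refine Nat.eq_of_testBit_eq fun i => ?_
  rw [Bool.eq_iff_iff, testBit_vertexMask, show (1023 : ℕ) = 2 ^ 10 - 1 from rfl,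
    Nat.testBit_two_pow_sub_one, decide_eq_true_eq]
  exact ⟨fun ⟨v, _, hv⟩ => hv ▸ v.isLt, fun hi => ⟨⟨i, hi⟩, h _, rfl⟩⟩

/-- Check that, for every way to add to `arcs` an orientation of the given edges, either some vertex
is a source or a sink, or two cops win within four rounds. -/
def orientationsWon : List (Fin 10 × Fin 10) → List (Fin 10 × Fin 10) → Bool
  | [], arcs =>
    !((vertexMask (arcs.map Prod.fst)).beq 1023) || !((vertexMask (arcs.map Prod.snd)).beq 1023) ||
      !((allRobbers (winning arcs 4)).beq 0)
  | e :: es, arcs => orientationsWon es (e :: arcs) && orientationsWon es (e.swap :: arcs)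

lemma copsWin_two_of_orientationsWon {A : Fin 10 → Fin 10 → Prop}
    (hasymm : ∀ u v, A u v → ¬A v u) (hout : ∀ v, ∃ w, A v w) (hin : ∀ v, ∃ u, A u v)
    {es arcs : List (Fin 10 × Fin 10)} (hcheck : orientationsWon es arcs)
    (hes : ∀ e ∈ es, A e.1 e.2 ∨ A e.2 e.1) (harcs : ∀ e ∈ arcs, A e.1 e.2)
    (hA : ∀ u v, A u v → (u, v) ∈ arcs ∨ (u, v) ∈ es ∨ (v, u) ∈ es) : CopsWin A 2 := by
  induction es generalizing arcs with
  | nil =>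
    have hA' : ∀ u v, A u v ↔ (u, v) ∈ arcs :=
      fun u v => ⟨fun h => by simpa using hA u v h, harcs (u, v)⟩
    have hfst : vertexMask (arcs.map Prod.fst) = 1023 := vertexMask_eq fun v =>
      (hout v).elim fun w hw => List.mem_map.2 ⟨(v, w), (hA' v w).1 hw, rfl⟩
    have hsnd : vertexMask (arcs.map Prod.snd) = 1023 := vertexMask_eq fun v =>
      (hin v).elim fun u hu => List.mem_map.2 ⟨(u, v), (hA' u v).1 hu, rfl⟩
    refine copsWin_two_of_allRobbers_ne_zero hA' (t := 4) fun h => ?_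
    rw [orientationsWon, hfst, hsnd, h] at hcheck
    exact absurd hcheck (by decide)
  | cons e es ih =>
    rw [orientationsWon, Bool.and_eq_true] at hcheck
    rw [List.forall_mem_cons] at hes
    rcases hes.1 with he | he
    · refine ih hcheck.1 hes.2 (List.forall_mem_cons.2 ⟨he, harcs⟩) fun u v huv => ?_
      have hne : (v, u) ≠ e := by rintro rfl; exact hasymm _ _ huv he
      have := hA u v huv
      simp only [List.mem_cons, hne, false_or] at this ⊢
      tauto
    · refine ih hcheck.2 hes.2 (List.forall_mem_cons.2 ⟨he, harcs⟩) fun u v huv => ?_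
      have hne : (u, v) ≠ e := by rintro rfl; exact hasymm _ _ huv he
      have hswap : (v, u) = e ↔ (u, v) = e.swap := by
        rw [← Prod.swap_inj, Prod.swap_prod_mk]
      have := hA u v huv
      simp only [List.mem_cons, hne, hswap, false_or] at this ⊢
      tauto

/-! ### The Petersen graph -/

/-- The neighbours of a vertex of the Petersen graph. -/
def petersenNeighbors : Fin 10 → List (Fin 10) :=
  ![[1, 4, 5], [0, 2, 6], [1, 3, 7], [2, 4, 8], [0, 3, 9],
    [0, 7, 8], [1, 8, 9], [2, 5, 9], [3, 5, 6], [4, 6, 7]]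

/-- The Petersen graph, with outer cycle `0, 1, 2, 3, 4` and inner cycle `5, 7, 9, 6, 8`. -/
def petersen : SimpleGraph (Fin 10) where
  Adj u v := v ∈ petersenNeighbors u
  symm := ⟨by decide +kernel⟩
  loopless := ⟨by decide +kernel⟩

instance : DecidableRel petersen.Adj :=
  fun u v => inferInstanceAs (Decidable (v ∈ petersenNeighbors u))

/-- The edges of the path `0, 1, 2, 3` in the Petersen graph. -/
def petersenPath : List (Fin 10 × Fin 10) := [(0, 1), (1, 2), (2, 3)]

/-- The edges of the Petersen graph outside of the path `0, 1, 2, 3`. -/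
def petersenOtherEdges : List (Fin 10 × Fin 10) :=
  [(3, 4), (4, 0), (0, 5), (1, 6), (2, 7), (3, 8), (4, 9), (5, 7), (7, 9), (9, 6), (6, 8), (8, 5)]

lemma petersen_orientationsWon : orientationsWon petersenOtherEdges petersenPath := by
  decide +kernel

lemma copsWin_two_of_path {A : Fin 10 → Fin 10 → Prop} (hA : IsOrientation petersen A)
    (hout : ∀ v, ∃ w, A v w) (hin : ∀ v, ∃ u, A u v)
    (h₀₁ : A 0 1) (h₁₂ : A 1 2) (h₂₃ : A 2 3) : CopsWin A 2 := by
  have hedge : ∀ e ∈ petersenOtherEdges, petersen.Adj e.1 e.2 := by decide +kernel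
  have hmem : ∀ u v, petersen.Adj u v → ((u, v) ∈ petersenPath ∨ (v, u) ∈ petersenPath) ∨
      (u, v) ∈ petersenOtherEdges ∨ (v, u) ∈ petersenOtherEdges := by decide +kernel
  have hpath : ∀ e ∈ petersenPath, A e.1 e.2 := by simp [petersenPath, *]
  refine copsWin_two_of_orientationsWon hA.2 hout hin petersen_orientationsWon
    (fun e he => (hA.1 _ _).1 (hedge e he)) hpath fun u v huv => ?_
  rcases hmem u v ((hA.1 u v).2 (.inl huv)) with (h | h) | h
  · exact .inl h
  · exact absurd (hpath _ h) (hA.2 _ _ huv)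
  · exact .inr h

/-- The neighbour of `v` in the Petersen graph other than `x` and `y`. -/
def thirdNeighbor (v x y : Fin 10) : Fin 10 :=
  ((petersenNeighbors v).find? fun z => z != x && z != y).getD 0

/-- The common neighbour of two nonadjacent vertices of the Petersen graph. -/
def commonNeighbor (u v : Fin 10) : Fin 10 :=
  ((petersenNeighbors u).find? fun z => (petersenNeighbors v).contains z).getD 0

/-- The automorphism of the Petersen graph that maps `0, 1, 2, 3` to the path `0, b, c, d`. -/
def petersenMap (b c d : Fin 10) : Fin 10 → Fin 10 :=
  ![0, b, c, d, commonNeighbor d 0, thirdNeighbor 0 b (commonNeighbor d 0), thirdNeighbor b 0 c,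
    thirdNeighbor c b d, thirdNeighbor d c (commonNeighbor d 0),
    thirdNeighbor (commonNeighbor d 0) d 0]

lemma petersenMap_spec : ∀ b, petersen.Adj 0 b → ∀ c, petersen.Adj b c → 0 ≠ c →
    ∀ d, petersen.Adj c d → b ≠ d →
    (∀ x, ∃ u, petersenMap b c d u = x) ∧
      ∀ u v, petersen.Adj u v ↔ petersen.Adj (petersenMap b c d u) (petersenMap b c d v) := by
  decide +kernel

lemma CatchIn.map {W : Type*} {A : V → V → Prop} {B : W → W → Prop} {f : V → W}
    (hf : Function.Surjective f) (hAB : ∀ u v, A u v ↔ B (f u) (f v)) {k t : ℕ} {c : Fin k → V}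
    {r : V} (h : CatchIn A k t c r) : CatchIn B k t (f ∘ c) (f r) := by
  have hmove : ∀ {c c' : Fin k → V}, (∀ i, c' i = c i ∨ A (c i) (c' i)) →
      ∀ i, (f ∘ c') i = (f ∘ c) i ∨ B ((f ∘ c) i) ((f ∘ c') i) :=
    fun hc i => (hc i).imp (congrArg f) (hAB _ _).1
  induction h with
  | caught h => exact .caught (h.imp fun i => congrArg f)
  | stepCatch c' hc h => exact .stepCatch _ (hmove hc) (h.imp fun i => congrArg f)
  | step c' hc h ih =>
    refine .step _ (hmove hc) fun r' hr => ?_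
    rcases hr with rfl | hr
    · exact ih _ (.inl rfl)
    · obtain ⟨x, rfl⟩ := hf r'
      exact ih x (.inr ((hAB _ _).2 hr))

lemma CopsWin.map {W : Type*} {A : V → V → Prop} {B : W → W → Prop} {f : V → W}
    (hf : Function.Surjective f) (hAB : ∀ u v, A u v ↔ B (f u) (f v)) {k : ℕ}
    (h : CopsWin A k) : CopsWin B k := by
  obtain ⟨t, c, hc⟩ := h
  exact ⟨t, f ∘ c, hf.forall.2 fun r => (hc r).map hf hAB⟩

/-- Two cops win on every orientation of the Petersen graph without sources and sinks. -/
lemma copsWin_two_of_isOrientation_petersen {A : Fin 10 → Fin 10 → Prop}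
    (hA : IsOrientation petersen A) (hout : ∀ v, ∃ w, A v w) (hin : ∀ v, ∃ u, A u v) :
    CopsWin A 2 := by
  obtain ⟨b, hab⟩ := hout 0
  obtain ⟨c, hbc⟩ := hout b
  obtain ⟨d, hcd⟩ := hout c
  have hadj {u v : Fin 10} (h : A u v) : petersen.Adj u v := (hA.1 u v).2 (.inl h)
  obtain ⟨hsurj, hmap⟩ := petersenMap_spec b (hadj hab) c (hadj hbc)
    (by rintro rfl; exact hA.2 _ _ hab hbc) d (hadj hcd) (by rintro rfl; exact hA.2 _ _ hbc hcd)
  set f := petersenMap b c d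
  refine CopsWin.map (A := fun u v => A (f u) (f v)) hsurj (fun _ _ => Iff.rfl)
    (copsWin_two_of_path ⟨fun u v => (hmap u v).trans (hA.1 _ _), fun u v => hA.2 _ _⟩
      (fun v => ?_) (fun v => ?_) hab hbc hcd)
  · obtain ⟨w, hw⟩ := hout (f v)
    obtain ⟨x, rfl⟩ := hsurj w
    exact ⟨x, hw⟩
  · obtain ⟨w, hw⟩ := hin (f v)
    obtain ⟨x, rfl⟩ := hsurj w
    exact ⟨x, hw⟩

lemma StronglyConnected.exists_out [Nontrivial V] {A : V → V → Prop} (h : StronglyConnected A)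
    (v : V) : ∃ w, A v w := by
  obtain ⟨u, hu⟩ := exists_ne v
  rcases (h v u).cases_head with rfl | ⟨w, hw, -⟩
  · exact absurd rfl hu
  · exact ⟨w, hw⟩

lemma StronglyConnected.exists_in [Nontrivial V] {A : V → V → Prop} (h : StronglyConnected A)
    (v : V) : ∃ u, A u v := by
  obtain ⟨u, hu⟩ := exists_ne v
  rcases (h u v).cases_tail with rfl | ⟨w, -, hw⟩
  · exact absurd rfl hu
  · exact ⟨w, hw⟩

/-- On the Petersen graph, a robber not yet caught by at most two cops can move out of their
reach. -/
lemma petersen_exists_escape {k : ℕ} (hk : k ≤ 2) {c : Fin k → Fin 10} {r : Fin 10}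
    (h : ∀ i, c i ≠ r) :
    ∃ r', (r' = r ∨ petersen.Adj r r') ∧ ∀ i, c i ≠ r' ∧ ¬petersen.Adj (c i) r' := by
  have key : ∀ r x y, x ≠ r → y ≠ r → ∃ r', (r' = r ∨ petersen.Adj r r') ∧
      (x ≠ r' ∧ ¬petersen.Adj x r') ∧ (y ≠ r' ∧ ¬petersen.Adj y r') := by decide +kernel
  interval_cases k
  · exact ⟨r, .inl rfl, fun i => i.elim0⟩
  · obtain ⟨r', hr, hx, -⟩ := key r (c 0) (c 0) (h 0) (h 0)
    exact ⟨r', hr, Fin.forall_fin_one.2 hx⟩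
  · obtain ⟨r', hr, hx, hy⟩ := key r (c 0) (c 1) (h 0) (h 1)
    exact ⟨r', hr, Fin.forall_fin_two.2 ⟨hx, hy⟩⟩

lemma petersen_not_catchIn {k t : ℕ} (hk : k ≤ 2) {c : Fin k → Fin 10} {r : Fin 10}
    (hsafe : ∀ i, c i ≠ r ∧ ¬petersen.Adj (c i) r) : ¬CatchIn petersen.Adj k t c r := by
  intro h
  have hfree : ∀ {c c' : Fin k → Fin 10} {r : Fin 10},
      (∀ i, c i ≠ r ∧ ¬petersen.Adj (c i) r) →
      (∀ i, c' i = c i ∨ petersen.Adj (c i) (c' i)) → ∀ i, c' i ≠ r := by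
    rintro c c' r hs hc i rfl
    exact (hc i).elim (fun h => (hs i).1 h.symm) (hs i).2
  induction h with
  | caught h => exact h.elim fun i hi => (hsafe i).1 hi
  | stepCatch c' hc h => exact h.elim (hfree hsafe hc)
  | step c' hc h ih =>
    obtain ⟨r', hr, hsafe'⟩ := petersen_exists_escape hk (hfree hsafe hc)
    exact ih r' hr hsafe'

lemma three_le_copNumber_petersen : 3 ≤ copNumber petersen.Adj := by
  refine le_csInf ⟨10, 0, id, fun r => .caught ⟨r, rfl⟩⟩ ?_
  rintro k ⟨t, c, hc⟩
  by_contra! hk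
  obtain ⟨r, hr⟩ : ∃ r, ∀ i, c i ≠ r := by
    by_contra! hsurj
    have := Fintype.card_le_of_surjective c hsurj
    simp only [Fintype.card_fin] at this
    omega
  obtain ⟨r', -, hsafe⟩ := petersen_exists_escape (by omega) hr
  exact petersen_not_catchIn (by omega) hsafe (hc r')

/-- A strongly connected orientation of the Petersen graph. -/
def petersenArc (u v : Fin 10) : Prop :=
  v ∈ (![[1, 5], [2], [3], [4], [0], [8], [1, 9], [2, 5], [3, 6], [4, 7]] :
    Fin 10 → List (Fin 10)) u

instance : DecidableRel petersenArc :=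
  fun u v => inferInstanceAs (Decidable (v ∈ (![_, _, _, _, _, _, _, _, _, _] : Fin 10 → _) u))

lemma isOrientation_petersenArc : IsOrientation petersen petersenArc := by
  constructor <;> decide +kernel

lemma stronglyConnected_petersenArc : StronglyConnected petersenArc := by
  have iter {R : Fin 10 → Fin 10 → Prop} {p : Fin 10 → Fin 10} (hp : ∀ u, p u = u ∨ R u (p u))
      (n : ℕ) (u : Fin 10) : Relation.ReflTransGen R u (p^[n] u) := by
    induction n generalizing u with
    | zero => exact .refl
    | succ n ih =>
      rw [Function.iterate_succ_apply]
      rcases hp u with h | h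
      · rw [h]; exact ih u
      · exact .head h (ih _)
  intro u v
  have hto : (![0, 2, 3, 4, 0, 8, 9, 2, 3, 4] : Fin 10 → Fin 10)^[9] u = 0 := by
    revert u; decide +kernel
  have hfrom : (![0, 0, 1, 2, 3, 0, 8, 9, 5, 6] : Fin 10 → Fin 10)^[9] v = 0 := by
    revert v; decide +kernel
  have h₁ := iter (R := petersenArc) (p := ![0, 2, 3, 4, 0, 8, 9, 2, 3, 4])
    (by decide +kernel) 9 u
  have h₂ := iter (R := Function.swap petersenArc) (p := ![0, 0, 1, 2, 3, 0, 8, 9, 5, 6])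
    (by unfold Function.swap; decide +kernel) 9 v
  rw [hto] at h₁
  rw [hfrom] at h₂
  exact h₁.trans (Relation.reflTransGen_swap.1 h₂)

/-- There is a finite simple graph `G`, admitting a strongly connected
orientation, such that every strongly connected orientation `D` of `G`
satisfies `c(D) < c(G)`. -/
theorem stmt_6 :
    ∃ (V : Type) (_ : Fintype V) (G : SimpleGraph V),
      (∃ A : V → V → Prop, IsOrientation G A ∧ StronglyConnected A) ∧
      ∀ A : V → V → Prop, IsOrientation G A → StronglyConnected A →
        copNumber A < copNumber G.Adj := by
  refine ⟨Fin 10, inferInstance, petersen,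
    ⟨petersenArc, isOrientation_petersenArc, stronglyConnected_petersenArc⟩, fun A hA hconn => ?_⟩
  have h : CopsWin A 2 :=
    copsWin_two_of_isOrientation_petersen hA hconn.exists_out hconn.exists_in
  exact (Nat.sInf_le h).trans_lt three_le_copNumber_petersen

end CopsRobbers
end

section
/- For every integer k ≥ 3 there exists a cop-win digraph D on n = 2k+1 vertices whose capture time satisfies capt(D) ≥ (k−1)²; in particular, for arbitrarily large n there exist n-vertex cop-win digraphs with capture time at least (n−3)²/4, so cop-win digraphs can have capture time quadratic in the number of vertices. -/
open Classical

universe u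

namespace CopsRobbers

variable {V : Type u}

/-- A family of states from which the robber can always answer the move of a single cop
certifies that the cop cannot guarantee capture within the given number of rounds. -/
theorem not_catchIn_of_evasion (A : V → V → Prop) (P : ℕ → V → V → Prop)
    (hP : ∀ t c r, P t c r → c ≠ r)
    (hstep : ∀ t c r, P (t + 1) c r → ∀ c', c' = c ∨ A c c' →
      c' ≠ r ∧ ∃ r', (r' = r ∨ A r r') ∧ P t c' r') :
    ∀ t (c : Fin 1 → V) r, P t (c 0) r → ¬ CatchIn A 1 t c r := by
  intro t c r h hc
  induction hc with
  | caught h' =>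
    obtain ⟨i, hi⟩ := h'
    rw [Subsingleton.elim i 0] at hi
    exact hP _ _ _ h hi
  | stepCatch c' hc h' =>
    obtain ⟨i, hi⟩ := h'
    rw [Subsingleton.elim i 0] at hi
    exact (hstep _ _ _ h _ (hc 0)).1 hi
  | step c' hc _ ih =>
    obtain ⟨_, r', hr', hsafe⟩ := hstep _ _ _ h _ (hc 0)
    exact ih r' hr' hsafe

/-- The arcs of a digraph on `2 * k + 1` vertices. The left summand is a patrol route, whose
vertex `1` dominates the route, and from whose vertices `0` and `k - 1` the odd and the even
vertices of the right summand are attacked. The right summand is a directed cycle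
without exits, whose vertex `0` is attacked from the whole route. -/
def patrolArc (k : ℕ) : Fin k ⊕ Fin (k + 1) → Fin k ⊕ Fin (k + 1) → Prop
  | .inl u, .inl v => u.val = 1 ∨ v.val + 1 = u.val ∨ (u.val = 0 ∧ v.val + 2 = k)
  | .inl u, .inr j => j.val = 0 ∨ (u.val = 0 ∧ j.val % 2 = 1) ∨ (u.val + 1 = k ∧ j.val % 2 = 0)
  | .inr _, .inl _ => False
  | .inr i, .inr j => j.val = i.val + 1 ∨ (i.val = k ∧ j.val = 0)

/-- The distance on the patrol route from `u` to the vertex attacking the cycle vertices of the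
parity of `j`. -/
def patrolDist (k j u : ℕ) : ℕ :=
  if j % 2 = 1 then u else if u = 0 then k - 1 else if u + 1 = k then 0 else u

/-- States from which the robber survives `t` rounds in `patrolArc k`. -/
def PatrolEvades (k t : ℕ) : Fin k ⊕ Fin (k + 1) → Fin k ⊕ Fin (k + 1) → Prop
  | .inl _, .inl _ => False
  | .inl u, .inr j => t = 0 ∨ (1 ≤ j.val ∧ 1 ≤ patrolDist k j u ∧
      t ≤ patrolDist k j u + (k - 1) * (k - j.val))
  | .inr _, .inl _ => True
  | .inr i, .inr j => j.val ≠ i.val ∧ j.val ≠ i.val + 1 ∧ ¬ (i.val = k ∧ j.val = 0)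

theorem exists_evading_cycle_move {k : ℕ} (hk : 3 ≤ k) (t : ℕ) (i j : Fin (k + 1))
    (h : i ≠ j) :
    ∃ r', (r' = .inr j ∨ patrolArc k (.inr j) r') ∧ PatrolEvades k t (.inr i) r' := by
  have hij : i.val ≠ j.val := fun e => h (Fin.ext e)
  have hi := i.isLt
  have hj := j.isLt
  by_cases h1 : j.val = i.val + 1 ∨ (i.val = k ∧ j.val = 0)
  · by_cases h2 : j.val = k
    · exact ⟨.inr ⟨0, by omega⟩, Or.inr (Or.inr ⟨h2, rfl⟩), by simp only [PatrolEvades]; omega⟩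
    · exact ⟨.inr ⟨j.val + 1, by omega⟩, Or.inr (Or.inl rfl), by simp only [PatrolEvades]; omega⟩
  · exact ⟨.inr j, Or.inl rfl, by simp only [PatrolEvades]; omega⟩

theorem patrolEvades_step {k : ℕ} (hk : 3 ≤ k) (t : ℕ) (c r : Fin k ⊕ Fin (k + 1))
    (h : PatrolEvades k (t + 1) c r) (c' : Fin k ⊕ Fin (k + 1))
    (hc : c' = c ∨ patrolArc k c c') :
    c' ≠ r ∧ ∃ r', (r' = r ∨ patrolArc k r r') ∧ PatrolEvades k t c' r' := by
  rcases c with u | i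
  · rcases r with v | j
    · exact h.elim
    obtain h | ⟨hj, hd, ht⟩ := h
    · omega
    have hu := u.isLt
    have hjlt := j.isLt
    rcases c' with u' | i'
    · refine ⟨by simp, ?_⟩
      have hu' := u'.isLt
      have hd' : patrolDist k j u ≤ patrolDist k j u' + 1 := by
        rcases hc with hc | hc
        · rw [Sum.inl.inj hc]; omega
        · simp only [patrolArc] at hc
          unfold patrolDist
          split_ifs <;> omega
      by_cases hz : 1 ≤ patrolDist k j u'
      · exact ⟨.inr j, Or.inl rfl, Or.inr ⟨hj, hz, by omega⟩⟩
      by_cases hjk : j.val = k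
      · refine ⟨.inr j, Or.inl rfl, Or.inl ?_⟩
        rw [hjk, Nat.sub_self, Nat.mul_zero] at ht
        rw [hjk] at hd' hz
        omega
      · have hnew : patrolDist k (j.val + 1) u' = k - 1 := by
          unfold patrolDist at hz ⊢
          split_ifs at hz ⊢ <;> omega
        refine ⟨.inr ⟨j.val + 1, by omega⟩, Or.inr (Or.inl rfl), Or.inr ⟨?_, ?_, ?_⟩⟩
        · simp
        · simp only [hnew]; omega
        · simp only [hnew]
          have hm : (k - 1) * (k - j.val) = (k - 1) + (k - 1) * (k - (j.val + 1)) := by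
            rw [show k - j.val = (k - (j.val + 1)) + 1 by omega]; ring
          omega
    · have hne : i' ≠ j := by
        rintro rfl
        rcases hc with hc | hc
        · cases hc
        · simp only [patrolArc] at hc
          unfold patrolDist at hd
          split_ifs at hd <;> omega
      exact ⟨by simpa using hne, exists_evading_cycle_move hk t i' j hne⟩
  · rcases c' with u' | i'
    · rcases hc with hc | hc
      · cases hc
      · exact hc.elim
    rcases r with v | j
    · exact ⟨by simp, .inl v, Or.inl rfl, trivial⟩
    have hne : i' ≠ j := by
      rintro rfl
      obtain ⟨h1, h2, h3⟩ := h
      rcases hc with hc | hc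
      · exact h1 (by rw [Sum.inr.inj hc])
      · simp only [patrolArc] at hc
        omega
    exact ⟨by simpa using hne, exists_evading_cycle_move hk t i' j hne⟩

theorem PatrolEvades.ne {k t : ℕ} {c r : Fin k ⊕ Fin (k + 1)} (h : PatrolEvades k t c r) :
    c ≠ r := by
  rintro rfl
  rcases c with u | i
  · exact h
  · exact h.1 rfl

theorem sq_le_of_copsWinIn_patrolArc {k : ℕ} (hk : 3 ≤ k) {t : ℕ}
    (h : CopsWinIn (patrolArc k) 1 t) : (k - 1) ^ 2 ≤ t := by
  by_contra! hlt
  obtain ⟨c, hc⟩ := h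
  suffices ∃ r, PatrolEvades k t (c 0) r by
    obtain ⟨r, hr⟩ := this
    exact not_catchIn_of_evasion (patrolArc k) (PatrolEvades k) (fun _ _ _ => PatrolEvades.ne)
      (patrolEvades_step hk) t c r hr (hc r)
  rcases c 0 with u | i
  · by_cases hu : u.val = 0
    · refine ⟨.inr ⟨2, by omega⟩, Or.inr ⟨by simp, ?_, ?_⟩⟩
      · simp [patrolDist, hu]; omega
      · have : (k - 1) ^ 2 = (k - 1) + (k - 1) * (k - 2) := by
          obtain ⟨n, rfl⟩ := Nat.exists_eq_add_of_le' hk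
          simp only [Nat.add_succ_sub_one, Nat.reduceSubDiff]; ring
        simp [patrolDist, hu]; omega
    · refine ⟨.inr ⟨1, by omega⟩, Or.inr ⟨by simp, ?_, ?_⟩⟩
      · simp [patrolDist]; omega
      · have : (k - 1) ^ 2 = (k - 1) * (k - 1) := sq _
        simp [patrolDist]; omega
  · exact ⟨.inl ⟨1, by omega⟩, trivial⟩

theorem exists_patrolArc_dist_pred {k : ℕ} (hk : 3 ≤ k) (j : ℕ) (u : Fin k)
    (hd : patrolDist k j u ≠ 0) :
    ∃ u' : Fin k, patrolArc k (.inl u) (.inl u') ∧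
      patrolDist k j u' + 1 = patrolDist k j u := by
  have hu := u.isLt
  by_cases hj : j % 2 = 1
  · simp only [patrolDist, hj, if_true] at hd
    exact ⟨⟨u.val - 1, by omega⟩, Or.inr (Or.inl (by simp; omega)),
      by simp [patrolDist, hj]; omega⟩
  · by_cases h0 : u.val = 0
    · refine ⟨⟨k - 2, by omega⟩, Or.inr (Or.inr ⟨h0, by simp; omega⟩), ?_⟩
      simp only [patrolDist]
      split_ifs <;> omega
    · by_cases h1 : u.val = 1
      · refine ⟨⟨k - 1, by omega⟩, Or.inl h1, ?_⟩
        simp only [patrolDist]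
        split_ifs <;> omega
      · refine ⟨⟨u.val - 1, by omega⟩, Or.inr (Or.inl (by simp; omega)), ?_⟩
        simp only [patrolDist] at hd ⊢
        split_ifs at hd ⊢ <;> omega

theorem patrolDist_lt {k : ℕ} (j : ℕ) (u : Fin k) : patrolDist k j u < k := by
  have hu := u.isLt
  unfold patrolDist
  split_ifs <;> omega

theorem catchIn_patrolArc {k : ℕ} (hk : 3 ≤ k) (t : ℕ) :
    ∀ (u : Fin k) (j : Fin (k + 1)),
      (j.val = 0 ∨ patrolDist k j u + k * (k + 1 - j.val) ≤ t + 1) →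
      CatchIn (patrolArc k) 1 (t + 1) (fun _ => .inl u) (.inr j) := by
  induction t with
  | zero =>
    intro u j h
    have hj := j.isLt
    rcases h with h | h
    · exact .stepCatch (fun _ => .inr j) (fun _ => Or.inr (Or.inl h)) ⟨0, rfl⟩
    · have : k * 1 ≤ k * (k + 1 - j.val) := Nat.mul_le_mul_left _ (by omega)
      omega
  | succ t ih =>
    intro u j h
    have hj := j.isLt
    rcases h with h | h
    · exact .stepCatch (fun _ => .inr j) (fun _ => Or.inr (Or.inl h)) ⟨0, rfl⟩
    by_cases hd : patrolDist k j u = 0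
    · refine .stepCatch (fun _ => .inr j) (fun _ => Or.inr (Or.inr ?_)) ⟨0, rfl⟩
      unfold patrolDist at hd
      split_ifs at hd <;> omega
    obtain ⟨u', ha, hd'⟩ := exists_patrolArc_dist_pred hk j u hd
    refine .step (fun _ => .inl u') (fun _ => Or.inr ha) ?_
    rintro r' (rfl | hr)
    · exact ih u' j (Or.inr (by omega))
    · rcases r' with v | j'
      · exact hr.elim
      refine ih u' j' ?_
      rcases hr with hr | hr
      · right
        have hlt := patrolDist_lt j'.val u'
        have hm : k * (k + 1 - j.val) = k + k * (k + 1 - j'.val) := by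
          have := j'.isLt
          rw [show k + 1 - j.val = (k + 1 - j'.val) + 1 by omega]; ring
        omega
      · exact Or.inl hr.2

theorem copsWin_patrolArc {k : ℕ} (hk : 3 ≤ k) : CopsWin (patrolArc k) 1 := by
  refine ⟨k + k * (k + 1) + 1, fun _ => .inl ⟨1, by omega⟩, ?_⟩
  rintro (v | j)
  · exact .stepCatch (fun _ => .inl v) (fun _ => Or.inr (Or.inl rfl)) ⟨0, rfl⟩
  · refine catchIn_patrolArc hk _ _ j (Or.inr ?_)
    have := patrolDist_lt j.val (⟨1, by omega⟩ : Fin k)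
    have : k * (k + 1 - j.val) ≤ k * (k + 1) := Nat.mul_le_mul_left _ (by omega)
    omega

theorem not_copsWin_zero (A : V → V → Prop) [Nonempty V] : ¬ CopsWin A 0 := by
  rintro ⟨t, c, hc⟩
  have hfree : ∀ t (c : Fin 0 → V) r, ¬ CatchIn A 0 t c r := by
    intro t c r h
    induction h with
    | caught h => exact h.elim fun i _ => i.elim0
    | stepCatch _ _ h => exact h.elim fun i _ => i.elim0
    | step _ _ _ ih => exact ih _ (Or.inl rfl)
  exact hfree t c (Classical.arbitrary V) (hc _)

theorem copNumber_eq_one [Nonempty V] {A : V → V → Prop} (h : CopsWin A 1) :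
    copNumber A = 1 := by
  have hle : copNumber A ≤ 1 := Nat.sInf_le h
  have hmem : CopsWin A (copNumber A) := Nat.sInf_mem (s := {k | CopsWin A k}) ⟨1, h⟩
  have hne : copNumber A ≠ 0 := fun h0 => not_copsWin_zero A (h0 ▸ hmem)
  omega

/-- For every `k ≥ 3` there is a cop-win digraph on `2k + 1` vertices whose
capture time is at least `(k - 1)^2`; in particular cop-win digraphs can have
capture time quadratic in the number of vertices. -/
theorem stmt_12 (k : ℕ) (hk : 3 ≤ k) :
    ∃ (V : Type) (_ : Fintype V) (A : V → V → Prop),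
      Fintype.card V = 2 * k + 1 ∧ copNumber A = 1 ∧
      (k - 1) ^ 2 ≤ captureTime A := by
  have hwin := copsWin_patrolArc hk
  have : Nonempty (Fin k ⊕ Fin (k + 1)) := ⟨.inr 0⟩
  have hone := copNumber_eq_one hwin
  refine ⟨Fin k ⊕ Fin (k + 1), inferInstance, patrolArc k, ?_, hone, ?_⟩
  · simp; omega
  · unfold captureTime
    rw [hone]
    exact sq_le_of_copsWinIn_patrolArc hk (Nat.sInf_mem hwin)

end CopsRobbers
end
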